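/- With $H_{\boldsymbol{\lambda}}$ presented as above, the combined localization map $H_{\boldsymbol{\lambda}}\to\prod_{I\in\mathcal{I}_{\boldsymbol{\lambda}}}\mathbb{C}[z_1,\dots,z_n]$, $[h]\mapsto (h(z;z_{I_1},\dots,z_{I_N}))_{I}$, is injective. -/

import Mathlib

open Finset MvPolynomial

/-- The defining relation of `H_λ = H^*_{GL_n}(F_λ)`. -/
noncomputable def relPoly (N n : ℕ) (lam : Fin N → ℕ) :
    Polynomial (MvPolynomial (Fin n ⊕ (Σ i : Fin N, Fin (lam i))) ℂ) :=
  (∏ v : Σ i : Fin N, Fin (lam i), (1 + Polynomial.X * Polynomial.C (X (Sum.inr v))))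
    - ∏ s : Fin n, (1 + Polynomial.X * Polynomial.C (X (Sum.inl s)))

/-- The ideal `𝒥` generated by the coefficients of the defining relation. -/
noncomputable def relIdeal (N n : ℕ) (lam : Fin N → ℕ) :
    Ideal (MvPolynomial (Fin n ⊕ (Σ i : Fin N, Fin (lam i))) ℂ) :=
  Ideal.span (Set.range fun k => (relPoly N n lam).coeff k)

/-!
A fixed point gives a bijection `e` from the variables `γ` to the variables `z`. Modulo the
relations, the `z` and the `γ` have the same elementary symmetric functions, so by the fundamental
theorem of symmetric polynomials, applied with coefficients in the ring of polynomials in `γ`, each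
`z_i` in a polynomial symmetric in `z` may be replaced by `γ_{e⁻¹ i}`. The result is the
restriction to the fixed point, with the `z` renamed to `γ`.
-/

theorem coeff_prod_one_add_X_mul_C {R ι : Type*} [CommSemiring R] (s : Finset ι) (f : ι → R)
    (k : ℕ) :
    (∏ i ∈ s, (1 + Polynomial.X * Polynomial.C (f i))).coeff k = (s.val.map f).esymm k := by
  simp only [prod_one_add, prod_mul_distrib, prod_const, ← map_prod, Polynomial.finsetSum_coeff,
    Polynomial.coeff_mul_C, Polynomial.coeff_X_pow, ite_mul, one_mul, zero_mul, eq_comm (a := k),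
    ← sum_filter, ← powersetCard_eq_filter, esymm_map_val]

theorem card_filter_fst_symm_eq {ι κ : Type*} {β : ι → Type*} [Fintype κ] [DecidableEq ι]
    (e : (Σ i, β i) ≃ κ) (j : ι) [Fintype (β j)] :
    #{a | (e.symm a).1 = j} = Fintype.card (β j) := by
  rw [← Fintype.card_subtype]
  exact Fintype.card_congr
    ((e.symm.subtypeEquiv fun _ => Iff.rfl).trans (Equiv.sigmaSubtype j))

theorem isSymmetric_aeval_sumElim_X_C {R ι κ : Type*} [CommSemiring R]
    {p : MvPolynomial (ι ⊕ κ) R}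
    (hp : ∀ σ : Equiv.Perm ι, rename (Equiv.sumCongr σ (Equiv.refl κ)) p = p) :
    (aeval (Sum.elim X (C ∘ X)) p : MvPolynomial ι (MvPolynomial κ R)).IsSymmetric := by
  intro σ
  conv_rhs => rw [← hp σ, aeval_rename]
  rw [← AlgHom.restrictScalars_apply R (rename σ), comp_aeval_apply]
  congr 2
  ext (i | v) <;> simp

section Symmetric

variable {R A ι κ : Type*} [CommRing R] [CommRing A] [Algebra R A]

theorem aeval_eq_of_esymm_eq [Fintype ι] {x y : ι → A}
    (hxy : ∀ k, (univ.val.map x).esymm k = (univ.val.map y).esymm k)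
    {p : MvPolynomial ι R} (hp : p.IsSymmetric) : aeval x p = aeval y p := by
  obtain ⟨q, hq⟩ := esymmAlgHom_surjective R le_rfl ⟨p, hp⟩
  have p_eq : p = aeval (fun i : Fin (Fintype.card ι) => esymm ι R (i + 1)) q := by
    rw [← esymmAlgHom_apply, hq]
  have aeval_p (w : ι → A) :
      aeval w p = aeval (fun i : Fin (Fintype.card ι) => (univ.val.map w).esymm (i + 1)) q := by
    simp only [p_eq, comp_aeval_apply, aeval_esymm_eq_multiset_esymm]
  simp only [aeval_p, hxy]

theorem aeval_sumElim_eq_of_esymm_eq [Fintype ι] {x y : ι → A}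
    (hxy : ∀ k, (univ.val.map x).esymm k = (univ.val.map y).esymm k) (g : κ → A)
    {p : MvPolynomial (ι ⊕ κ) R}
    (hp : ∀ σ : Equiv.Perm ι, rename (Equiv.sumCongr σ (Equiv.refl κ)) p = p) :
    aeval (Sum.elim x g) p = aeval (Sum.elim y g) p := by
  algebraize [(aeval g : MvPolynomial κ R →ₐ[R] A).toRingHom]
  have : IsScalarTower R (MvPolynomial κ R) A := .of_algHom (aeval g)
  have g_eq : g = algebraMap (MvPolynomial κ R) A ∘ X := funext fun v => (aeval_X g v).symm
  rw [g_eq, aeval_sumElim, aeval_sumElim]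
  exact aeval_eq_of_esymm_eq hxy (isSymmetric_aeval_sumElim_X_C hp)

theorem mem_of_forall_esymm_sub_mem [Fintype ι] [Fintype κ] (e : κ ≃ ι)
    {J : Ideal (MvPolynomial (ι ⊕ κ) R)}
    (hJ : ∀ k, (univ.val.map (X ∘ Sum.inr)).esymm k - (univ.val.map (X ∘ Sum.inl)).esymm k ∈ J)
    {p : MvPolynomial (ι ⊕ κ) R}
    (hp : ∀ σ : Equiv.Perm ι, rename (Equiv.sumCongr σ (Equiv.refl κ)) p = p)
    (hloc : aeval (Sum.elim X fun v => (X (e v) : MvPolynomial ι R)) p = 0) : p ∈ J := by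
  let π := Ideal.Quotient.mkₐ R J
  let z : ι → MvPolynomial (ι ⊕ κ) R ⧸ J := π ∘ X ∘ Sum.inl
  let γ : κ → MvPolynomial (ι ⊕ κ) R ⧸ J := π ∘ X ∘ Sum.inr
  have esymm_z_eq (k : ℕ) : (univ.val.map z).esymm k = (univ.val.map (γ ∘ e.symm)).esymm k := by
    have π_esymm : π ((univ.val.map (X ∘ Sum.inr)).esymm k) =
        π ((univ.val.map (X ∘ Sum.inl)).esymm k) :=
      (Ideal.Quotient.mk_eq_mk_iff_sub_mem _ _).2 (hJ k)
    have map_γ_univ : univ.val.map (γ ∘ e.symm) = univ.val.map γ := by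
      rw [← Multiset.map_map, Multiset.map_univ_val_equiv]
    rw [map_γ_univ]
    simpa only [z, γ, Function.comp_apply, esymm_map_val, map_sum, map_prod] using π_esymm.symm
  have π_eq_aeval : π = aeval (Sum.elim z γ) := by
    ext (i | v) <;> simp [z, γ]
  suffices π p = 0 from Ideal.Quotient.eq_zero_iff_mem.1 this
  calc π p = aeval (Sum.elim z γ) p := by rw [π_eq_aeval]
    _ = aeval (Sum.elim (γ ∘ e.symm) γ) p := aeval_sumElim_eq_of_esymm_eq esymm_z_eq γ hp
    _ = aeval (γ ∘ e.symm) (aeval (Sum.elim X fun v => (X (e v) : MvPolynomial ι R)) p) := by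
        rw [comp_aeval_apply]
        congr 2
        ext (i | v) <;> simp
    _ = 0 := by rw [hloc, map_zero]

theorem stmt15_general [Fintype ι] [Fintype κ] (e : κ ≃ ι) {p : MvPolynomial (ι ⊕ κ) R}
    (hp : ∀ σ : Equiv.Perm ι, rename (Equiv.sumCongr σ (Equiv.refl κ)) p = p)
    (hloc : aeval (Sum.elim X fun v => (X (e v) : MvPolynomial ι R)) p = 0) :
    p ∈ Ideal.span (Set.range fun k =>
      ((∏ v : κ, (1 + Polynomial.X * Polynomial.C (X (Sum.inr v)))) -
        ∏ i : ι, (1 + Polynomial.X * Polynomial.C (X (Sum.inl i))) :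
        Polynomial (MvPolynomial (ι ⊕ κ) R)).coeff k) := by
  refine mem_of_forall_esymm_sub_mem e (fun k => ?_) hp hloc
  simp only [← coeff_prod_one_add_X_mul_C, ← Polynomial.coeff_sub]
  exact Ideal.subset_span ⟨k, rfl⟩

end Symmetric

/-- The combined localization map `H_λ → ∏_{I ∈ I_λ} ℂ[z_1,…,z_n]`,
`[h] ↦ (h(z; z_{I_1},…,z_{I_N}))_I`, is injective: if a class of
`H_λ = ℂ[z;Γ_1;…;Γ_N]^{S_n × S_{λ_1} × ⋯ × S_{λ_N}}/𝒥` (represented by an invariant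
polynomial `p`) restricts to zero at every fixed point, then `p ∈ 𝒥`. -/
theorem stmt15 (N n : ℕ) (lam : Fin N → ℕ) (hsum : ∑ i, lam i = n)
    (p : MvPolynomial (Fin n ⊕ (Σ i : Fin N, Fin (lam i))) ℂ)
    (hinv : ∀ (σ : Equiv.Perm (Fin n)) (π : Equiv.Perm (Σ i : Fin N, Fin (lam i))),
      (∀ v, (π v).1 = v.1) → rename (Equiv.sumCongr σ π) p = p)
    (hloc : ∀ (f : Fin n → Fin N) (e : (Σ i : Fin N, Fin (lam i)) → Fin n),
      (∀ j, (univ.filter fun a => f a = j).card = lam j) →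
      Function.Injective e → (∀ v, f (e v) = v.1) →
      aeval (Sum.elim X fun v => (X (e v) : MvPolynomial (Fin n) ℂ)) p = 0) :
    p ∈ relIdeal N n lam := by
  let e : (Σ i : Fin N, Fin (lam i)) ≃ Fin n := Fintype.equivFinOfCardEq (by simp [hsum])
  exact stmt15_general e (fun σ => hinv σ (Equiv.refl _) fun _ => rfl)
    (hloc (fun a => (e.symm a).1) e
      (fun j => (card_filter_fst_symm_eq e j).trans (Fintype.card_fin _)) e.injective (by simp))
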